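/- Let β > 0 be real, λ ∈ ℂ, and let φ : [0,∞) → ℂ be continuous and bounded. Define w(t) = ∫₀^t φ(t−ξ) ξ^{β−1} E_{β,β}(−λ ξ^β) dξ. Then for every t ≥ 0, w(t) = (1/Γ(β)) ∫₀^t (t−τ)^{β−1} φ(τ) dτ − (λ/Γ(β)) ∫₀^t (t−τ)^{β−1} w(τ) dτ; that is, w = ₀D_t^{−β}(φ − λ w), where ₀D_t^{−β} is the Riemann–Liouville fractional integral of order β. -/

import Mathlib

open scoped Real
open MeasureTheory

/-- Generalized Mittag-Leffler function `E_{α,γ}(z) = ∑ zⁿ / Γ(αn + γ)`. -/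
noncomputable def mittagLeffler (α γ : ℝ) (z : ℂ) : ℂ :=
  ∑' n : ℕ, z ^ n / (Real.Gamma (α * n + γ) : ℂ)

/-!
Write `g_ν(s) = s ^ (ν - 1) / Γ(ν)` and `k_γ(s) = s ^ (γ - 1) E_{α,γ}(-λ s ^ α)`, so that
`k_γ = ∑ (-λ) ^ n g_{αn+γ}`. The beta integral says `g_μ * g_ν = g_{μ+ν}`, and applying it to each
term of the series gives `k_γ * g_α = k_{γ+α}`. Since `E_{α,γ}(z) = 1 / Γ(γ) + z E_{α,γ+α}(z)`, this
is the resolvent equation `λ (k_γ * g_α) = g_γ - k_γ`. Convolving it with `φ` and using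
`(φ * k_γ) * g_α = φ * (k_γ * g_α)` yields `w = φ * g_γ - λ (w * g_α)` for `w = φ * k_γ`.
-/

open Set Filter
open scoped ENNReal

section PosConvolution

variable {E E' E'' F F' F'' : Type*}
  [NormedAddCommGroup E] [NormedSpace ℝ E] [NormedAddCommGroup E'] [NormedSpace ℝ E']
  [NormedAddCommGroup E''] [NormedSpace ℝ E''] [NormedAddCommGroup F] [NormedSpace ℝ F]
  [NormedAddCommGroup F'] [NormedSpace ℝ F'] [NormedAddCommGroup F''] [NormedSpace ℝ F'']

theorem posConvolution_apply_of_nonneg (f : ℝ → E) (g : ℝ → E') (L : E →L[ℝ] E' →L[ℝ] F)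
    (ν : Measure ℝ) {x : ℝ} (hx : 0 ≤ x) :
    posConvolution f g L ν x = ∫ t in (0 : ℝ)..x, L (f t) (g (x - t)) ∂ν := by
  rcases hx.eq_or_lt with rfl | hx
  · simp [posConvolution]
  · simp [posConvolution, hx]

theorem indicator_Ioi_posConvolution (f : ℝ → E) (g : ℝ → E') (L : E →L[ℝ] E' →L[ℝ] F)
    (ν : Measure ℝ) :
    (Ioi 0).indicator (posConvolution f g L ν) = posConvolution f g L ν := by
  rw [posConvolution, indicator_indicator, inter_self]

theorem posConvolution_congr {f f₁ : ℝ → E} {g g₁ : ℝ → E'} (L : E →L[ℝ] E' →L[ℝ] F)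
    (ν : Measure ℝ) [NullSingletonClass ν] {T x : ℝ} (hf : EqOn f f₁ (Ioo 0 T))
    (hg : EqOn g g₁ (Ioo 0 T)) (hx : x ≤ T) :
    posConvolution f g L ν x = posConvolution f₁ g₁ L ν x := by
  rcases le_or_gt x 0 with hx₀ | hx₀
  · simp [posConvolution, hx₀]
  rw [posConvolution_apply_of_nonneg _ _ _ _ hx₀.le, posConvolution_apply_of_nonneg _ _ _ _ hx₀.le]
  refine intervalIntegral.integral_congr_Ioo_of_le hx₀.le fun t ht ↦ ?_
  have h_sub : x - t ∈ Ioo 0 T := ⟨sub_pos.2 ht.2, by linarith [ht.1]⟩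
  simp only [hf ⟨ht.1, ht.2.trans_le hx⟩, hg h_sub]

variable [CompleteSpace F] [CompleteSpace F'] [CompleteSpace F'']
  (L : E →L[ℝ] E' →L[ℝ] F) (L₂ : F →L[ℝ] E'' →L[ℝ] F') (L₃ : E →L[ℝ] F'' →L[ℝ] F')
  (L₄ : E' →L[ℝ] E'' →L[ℝ] F'') {f : ℝ → E} {g : ℝ → E'} {k : ℝ → E''}

theorem posConvolution_assoc_of_integrableOn
    (hL : ∀ x y z, L₂ (L x y) z = L₃ x (L₄ y z))
    (hf_int : IntegrableOn f (Ioi 0)) (hf : MemLp f ∞ (volume.restrict (Ioi 0)))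
    (hg : IntegrableOn g (Ioi 0)) (hk : IntegrableOn k (Ioi 0)) :
    posConvolution (posConvolution f g L volume) k L₂ volume =
      posConvolution f (posConvolution g k L₄ volume) L₃ volume := by
  rw [← integrable_indicator_iff measurableSet_Ioi] at hf_int hg hk
  rw [← memLp_indicator_iff_restrict measurableSet_Ioi] at hf
  rw [posConvolution_eq_convolution_indicator _ k L₂ volume,
    posConvolution_eq_convolution_indicator f _ L₃ volume,
    indicator_Ioi_posConvolution, indicator_Ioi_posConvolution,
    posConvolution_eq_convolution_indicator f g L volume,
    posConvolution_eq_convolution_indicator g k L₄ volume]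
  ext x
  refine convolution_assoc L L₂ L₃ L₄ hL hf.1 hg.1 hk.1 (hf_int.ae_convolution_exists L hg)
    (hg.norm.ae_convolution_exists _ hk.norm) ?_
  exact ((hg.norm.integrable_convolution _ hk.norm).comp_sub_left x).smul_of_top_right hf.norm

theorem posConvolution_assoc (hL : ∀ x y z, L₂ (L x y) z = L₃ x (L₄ y z)) {T : ℝ}
    (hf : MemLp f ∞ (volume.restrict (Ioo 0 T)))
    (hg : IntegrableOn g (Ioo 0 T)) (hk : IntegrableOn k (Ioo 0 T)) :
    posConvolution (posConvolution f g L volume) k L₂ volume T =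
      posConvolution f (posConvolution g k L₄ volume) L₃ volume T := by
  set I := Ioo 0 T
  have hI : MeasurableSet I := measurableSet_Ioo
  have hf_int : IntegrableOn f I := hf.integrable le_top
  calc
    _ = posConvolution (posConvolution (I.indicator f) (I.indicator g) L volume)
          (I.indicator k) L₂ volume T :=
      posConvolution_congr _ _ (fun τ hτ ↦ posConvolution_congr _ _ eqOn_indicator.symm
        eqOn_indicator.symm hτ.2.le) eqOn_indicator.symm le_rfl
    _ = posConvolution (I.indicator f)
          (posConvolution (I.indicator g) (I.indicator k) L₄ volume) L₃ volume T := by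
      rw [posConvolution_assoc_of_integrableOn L L₂ L₃ L₄ hL
        (hf_int.integrable_indicator hI).integrableOn
        (((memLp_indicator_iff_restrict hI).2 hf).restrict _)
        (hg.integrable_indicator hI).integrableOn (hk.integrable_indicator hI).integrableOn]
    _ = _ :=
      posConvolution_congr _ _ eqOn_indicator (fun τ hτ ↦ posConvolution_congr _ _ eqOn_indicator
        eqOn_indicator hτ.2.le) le_rfl

end PosConvolution

section MittagLeffler

theorem rpow_mul_exp_neg_le_Gamma {A x : ℝ} (hA : 0 ≤ A) (hx : 1 ≤ x) :
    A ^ (x - 1) * Real.exp (-A) ≤ Real.Gamma x := by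
  have hΓ := Real.GammaIntegral_convergent (zero_lt_one.trans_le hx)
  calc
    A ^ (x - 1) * Real.exp (-A) = ∫ y in Ioi A, Real.exp (-y) * A ^ (x - 1) := by
      rw [integral_mul_const, integral_exp_neg_Ioi, mul_comm]
    _ ≤ ∫ y in Ioi A, Real.exp (-y) * y ^ (x - 1) := by
      refine setIntegral_mono_on ((integrableOn_exp_neg_Ioi A).mul_const _)
        (hΓ.mono_set (Ioi_subset_Ioi hA)) measurableSet_Ioi fun y (hy : A < y) ↦ ?_
      gcongr
    _ ≤ ∫ y in Ioi 0, Real.exp (-y) * y ^ (x - 1) := by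
      refine setIntegral_mono_set hΓ ?_ (Ioi_subset_Ioi hA).eventuallyLE
      filter_upwards [ae_restrict_mem measurableSet_Ioi] with y (hy : 0 < y)
      exact mul_nonneg (Real.exp_nonneg _) (Real.rpow_nonneg hy.le _)
    _ = Real.Gamma x := (Real.Gamma_eq_integral (zero_lt_one.trans_le hx)).symm

variable {α : ℝ}

-- With `A ^ α = ‖z‖ + 1`, the bound `A ^ (x - 1) * exp (-A) ≤ Γ(x)` makes the series geometric.
theorem summable_mittagLeffler (hα : 0 < α) (γ : ℝ) (z : ℂ) :
    Summable fun n : ℕ ↦ z ^ n / (Real.Gamma (α * n + γ) : ℂ) := by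
  set A : ℝ := (‖z‖ + 1) ^ α⁻¹
  have hA : 0 < A := by positivity
  have hAα : A ^ α = ‖z‖ + 1 := Real.rpow_inv_rpow (by positivity) hα.ne'
  have h_geom : Summable fun n : ℕ ↦
      (‖z‖ / (‖z‖ + 1)) ^ n * (A ^ (γ - 1) * Real.exp (-A))⁻¹ := by
    refine (summable_geometric_of_lt_one (by positivity) ?_).mul_right _
    exact (div_lt_one (by positivity)).2 (lt_add_one _)
  have h_large : ∀ᶠ n : ℕ in atTop, 1 ≤ α * n + γ :=
    (tendsto_atTop_add_const_right _ γ
      (tendsto_natCast_atTop_atTop.const_mul_atTop hα)).eventually_ge_atTop 1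
  refine h_geom.of_norm_bounded_eventually_nat ?_
  filter_upwards [h_large] with n hn
  have h_Gamma : (‖z‖ + 1) ^ n * (A ^ (γ - 1) * Real.exp (-A)) ≤ Real.Gamma (α * n + γ) := by
    refine le_of_eq_of_le ?_ (rpow_mul_exp_neg_le_Gamma hA.le hn)
    rw [add_sub_assoc, Real.rpow_add hA, Real.rpow_mul hA.le, hAα, Real.rpow_natCast, mul_assoc]
  have hΓ : 0 < Real.Gamma (α * n + γ) := Real.Gamma_pos_of_pos (zero_lt_one.trans_le hn)
  calc
    ‖z ^ n / (Real.Gamma (α * n + γ) : ℂ)‖ = ‖z‖ ^ n / Real.Gamma (α * n + γ) := by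
      rw [norm_div, norm_pow, Complex.norm_real, Real.norm_of_nonneg hΓ.le]
    _ ≤ ‖z‖ ^ n / ((‖z‖ + 1) ^ n * (A ^ (γ - 1) * Real.exp (-A))) := by gcongr
    _ = (‖z‖ / (‖z‖ + 1)) ^ n * (A ^ (γ - 1) * Real.exp (-A))⁻¹ := by
      rw [div_pow, ← div_div, div_eq_mul_inv]

theorem continuous_mittagLeffler (hα : 0 < α) (γ : ℝ) : Continuous (mittagLeffler α γ) := by
  refine continuous_iff_continuousAt.2 fun z ↦ ?_
  have h_ball : ContinuousOn (mittagLeffler α γ) (Metric.ball 0 (‖z‖ + 1)) := by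
    refine continuousOn_tsum (fun n ↦ by fun_prop)
      (summable_mittagLeffler hα γ (‖z‖ + 1 : ℝ)).norm fun n x hx ↦ ?_
    have hx' : ‖x‖ ≤ |‖z‖ + 1| := (mem_ball_zero_iff.1 hx).le.trans (le_abs_self _)
    simp only [norm_div, norm_pow, Complex.norm_real, Real.norm_eq_abs]
    gcongr
  exact h_ball.continuousAt (Metric.isOpen_ball.mem_nhds (by simp))

theorem mittagLeffler_eq_inv_Gamma_add (hα : 0 < α) (γ : ℝ) (z : ℂ) :
    mittagLeffler α γ z = (Real.Gamma γ : ℂ)⁻¹ + z * mittagLeffler α (γ + α) z := by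
  unfold mittagLeffler
  rw [(summable_mittagLeffler hα γ z).tsum_eq_zero_add, ← tsum_mul_left]
  congr 1
  · simp
  · refine tsum_congr fun n ↦ ?_
    rw [pow_succ', mul_div_assoc]
    congr 4
    push_cast
    ring

end MittagLeffler

section Kernels

/-- The kernel `s ^ (ν - 1) / Γ(ν)` of the Riemann–Liouville fractional integral of order `ν`. -/
noncomputable def rlKernel (ν s : ℝ) : ℝ :=
  s ^ (ν - 1) / Real.Gamma ν

/-- The Mittag-Leffler kernel `s ^ (γ - 1) * E_{α,γ}(-λ s ^ α)`, the solution of the Volterra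
equation `k + λ • ₀D_t^{-α} k = rlKernel γ` on `(0, ∞)`. -/
noncomputable def mlKernel (α γ : ℝ) (lam : ℂ) (s : ℝ) : ℂ :=
  ((s ^ (γ - 1) : ℝ) : ℂ) * mittagLeffler α γ (-lam * ((s ^ α : ℝ) : ℂ))

section RLIntegral

variable {E : Type*} [NormedAddCommGroup E] [NormedSpace ℝ E]

/-- The Riemann–Liouville fractional integral `₀D_t^{-ν} f` of order `ν`. -/
noncomputable def rlIntegral (ν : ℝ) (f : ℝ → E) (t : ℝ) : E :=
  (1 / Real.Gamma ν) • ∫ u in (0 : ℝ)..t, (t - u) ^ (ν - 1) • f u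

theorem rlIntegral_eq_integral_rlKernel (ν : ℝ) (f : ℝ → E) (t : ℝ) :
    rlIntegral ν f t = ∫ u in (0 : ℝ)..t, rlKernel ν (t - u) • f u := by
  simp only [rlIntegral, rlKernel, ← intervalIntegral.integral_smul, smul_smul,
    one_div_mul_eq_div]

theorem rlIntegral_congr (ν : ℝ) {f g : ℝ → E} {t : ℝ} (ht : 0 ≤ t) (h : EqOn f g (Ioo 0 t)) :
    rlIntegral ν f t = rlIntegral ν g t := by
  simp only [rlIntegral]
  congr 1
  refine intervalIntegral.integral_congr_Ioo_of_le ht fun u hu ↦ ?_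
  simp only [h hu]

theorem rlIntegral_eq_posConvolution (ν : ℝ) (f : ℝ → E) {t : ℝ} (ht : 0 ≤ t) :
    rlIntegral ν f t =
      posConvolution f (rlKernel ν) (ContinuousLinearMap.lsmul ℝ ℝ).flip volume t := by
  simp [rlIntegral_eq_integral_rlKernel, posConvolution_apply_of_nonneg _ _ _ _ ht]

end RLIntegral

theorem rlKernel_pos {ν s : ℝ} (hν : 0 < ν) (hs : 0 < s) : 0 < rlKernel ν s :=
  div_pos (Real.rpow_pos_of_pos hs _) (Real.Gamma_pos_of_pos hν)

theorem intervalIntegrable_rlKernel {ν : ℝ} (hν : 0 < ν) (a b : ℝ) :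
    IntervalIntegrable (rlKernel ν) volume a b :=
  (intervalIntegral.intervalIntegrable_rpow' (by linarith)).div_const _

theorem intervalIntegrable_mlKernel {α γ : ℝ} (hα : 0 < α) (hγ : 0 < γ) (lam : ℂ) (a b : ℝ) :
    IntervalIntegrable (mlKernel α γ lam) volume a b := by
  have h_real : IntervalIntegrable (fun s : ℝ ↦ s ^ (γ - 1)) volume a b :=
    intervalIntegral.intervalIntegrable_rpow' (by linarith)
  have h_pow : IntervalIntegrable (fun s : ℝ ↦ ((s ^ (γ - 1) : ℝ) : ℂ)) volume a b :=
    ⟨h_real.1.ofReal, h_real.2.ofReal⟩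
  have h_rpow : Continuous fun s : ℝ ↦ s ^ α := Real.continuous_rpow_const hα.le
  have h_ml := continuous_mittagLeffler hα γ
  exact h_pow.mul_continuousOn (by fun_prop)

theorem integral_rlKernel_mul_rlKernel {μ ν x : ℝ} (hμ : 0 < μ) (hν : 0 < ν) (hx : 0 < x) :
    ∫ s in (0 : ℝ)..x, rlKernel μ s * rlKernel ν (x - s) = rlKernel (μ + ν) x := by
  have h_beta : ∫ s in (0 : ℝ)..x, s ^ (μ - 1) * (x - s) ^ (ν - 1) =
      x ^ (μ + ν - 1) * (Real.Gamma μ * Real.Gamma ν / Real.Gamma (μ + ν)) := by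
    have h := Complex.betaIntegral_scaled μ ν hx
    rw [Complex.betaIntegral_eq_Gamma_mul_div _ _ (by simpa) (by simpa), ← Complex.ofReal_add,
      Complex.Gamma_ofReal, Complex.Gamma_ofReal, Complex.Gamma_ofReal] at h
    apply Complex.ofReal_injective
    rw [← intervalIntegral.integral_ofReal]
    push_cast [Complex.ofReal_cpow hx.le] at h ⊢
    rw [← h]
    refine intervalIntegral.integral_congr_Ioo_of_le hx.le fun s hs ↦ ?_
    push_cast [Complex.ofReal_cpow hs.1.le, Complex.ofReal_cpow (sub_pos.2 hs.2).le]
    rfl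
  have hΓμ := (Real.Gamma_pos_of_pos hμ).ne'
  have hΓν := (Real.Gamma_pos_of_pos hν).ne'
  simp only [rlKernel, div_mul_div_comm]
  rw [intervalIntegral.integral_div, h_beta]
  field_simp

theorem intervalIntegrable_rlKernel_mul_rlKernel {μ ν x : ℝ} (hμ : 0 < μ) (hν : 0 < ν)
    (hx : 0 < x) :
    IntervalIntegrable (fun s ↦ rlKernel μ s * rlKernel ν (x - s)) volume 0 x := by
  refine intervalIntegral.intervalIntegrable_of_integral_ne_zero ?_
  rw [integral_rlKernel_mul_rlKernel hμ hν hx]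
  exact (rlKernel_pos (add_pos hμ hν) hx).ne'

theorem hasSum_mlKernel {α : ℝ} (hα : 0 < α) (γ : ℝ) (lam : ℂ) {s : ℝ} (hs : 0 < s) :
    HasSum (fun n : ℕ ↦ rlKernel (α * n + γ) s • (-lam) ^ n) (mlKernel α γ lam s) := by
  refine ((summable_mittagLeffler hα γ (-lam * ((s ^ α : ℝ) : ℂ))).hasSum.mul_left
    ((s ^ (γ - 1) : ℝ) : ℂ)).congr_fun fun n ↦ ?_
  rw [Complex.real_smul, rlKernel, add_sub_assoc, Real.rpow_add hs, Real.rpow_mul hs.le,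
    Real.rpow_natCast]
  push_cast
  ring

theorem rlIntegral_mlKernel {α γ ν x : ℝ} (hα : 0 < α) (hγ : 0 < γ) (hν : 0 < ν)
    (lam : ℂ) (hx : 0 < x) :
    rlIntegral ν (mlKernel α γ lam) x = mlKernel α (γ + ν) lam x := by
  have h_pos (n : ℕ) : 0 < α * n + γ := by positivity
  set F : ℕ → ℝ → ℂ := fun n s ↦ (rlKernel (α * n + γ) s * rlKernel ν (x - s)) • (-lam) ^ n
  have h_kernel (n : ℕ) :
      ∫ s in Ioo 0 x, rlKernel (α * n + γ) s * rlKernel ν (x - s) =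
        rlKernel (α * n + (γ + ν)) x := by
    rw [← integral_Ioc_eq_integral_Ioo, ← intervalIntegral.integral_of_le hx.le,
      integral_rlKernel_mul_rlKernel (h_pos n) hν hx, add_assoc]
  have h_integrable (n : ℕ) : Integrable (F n) (volume.restrict (Ioo 0 x)) :=
    ((intervalIntegrable_iff_integrableOn_Ioo_of_le hx.le).1
      (intervalIntegrable_rlKernel_mul_rlKernel (h_pos n) hν hx)).smul_const _
  have h_integral (n : ℕ) :
      ∫ s in Ioo 0 x, F n s = rlKernel (α * n + (γ + ν)) x • (-lam) ^ n := by
    rw [integral_smul_const, h_kernel]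
  have h_integral_norm (n : ℕ) :
      ∫ s in Ioo 0 x, ‖F n s‖ = ‖rlKernel (α * n + (γ + ν)) x • (-lam) ^ n‖ := by
    rw [norm_smul, Real.norm_of_nonneg (rlKernel_pos (by positivity) hx).le, ← h_kernel,
      ← integral_mul_const]
    refine setIntegral_congr_fun measurableSet_Ioo fun s hs ↦ ?_
    have h_nonneg := mul_pos (rlKernel_pos (h_pos n) hs.1) (rlKernel_pos hν (sub_pos.2 hs.2))
    simp only [F, norm_smul, Real.norm_of_nonneg h_nonneg.le]
  have h_series := hasSum_mlKernel hα (γ + ν) lam hx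
  have h_interchange := hasSum_integral_of_summable_integral_norm h_integrable
    (by simpa only [h_integral_norm] using h_series.summable.norm)
  simp only [h_integral] at h_interchange
  rw [← h_interchange.unique h_series, rlIntegral_eq_integral_rlKernel,
    intervalIntegral.integral_of_le hx.le, integral_Ioc_eq_integral_Ioo]
  refine setIntegral_congr_fun measurableSet_Ioo fun s hs ↦ ?_
  simp only [F, mul_smul, smul_comm _ (rlKernel ν (x - s))]
  exact ((hasSum_mlKernel hα γ lam hs.1).const_smul (rlKernel ν (x - s))).tsum_eq.symm

theorem mul_mlKernel_add {α : ℝ} (hα : 0 < α) (γ : ℝ) (lam : ℂ) {x : ℝ} (hx : 0 < x) :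
    lam * mlKernel α (γ + α) lam x = rlKernel γ x - mlKernel α γ lam x := by
  have h_pow : x ^ (γ + α - 1) = x ^ (γ - 1) * x ^ α := by
    rw [← Real.rpow_add hx]; ring_nf
  simp only [mlKernel, rlKernel, mittagLeffler_eq_inv_Gamma_add hα γ, h_pow]
  push_cast
  ring

theorem mul_rlIntegral_mlKernel {α γ x : ℝ} (hα : 0 < α) (hγ : 0 < γ) (lam : ℂ) (hx : 0 < x) :
    lam * rlIntegral α (mlKernel α γ lam) x = rlKernel γ x - mlKernel α γ lam x := by
  rw [rlIntegral_mlKernel hα hγ hα lam hx, mul_mlKernel_add hα γ lam hx]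

end Kernels

section Volterra

variable {E : Type*} [NormedAddCommGroup E] {f : ℝ → E} {t : ℝ}

theorem intervalIntegral_smul_comp_sub_left {𝕜 : Type*} [NormedSpace ℝ E] [SMul 𝕜 E]
    (k : ℝ → 𝕜) (f : ℝ → E) (t : ℝ) :
    ∫ s in (0 : ℝ)..t, k s • f (t - s) = ∫ s in (0 : ℝ)..t, k (t - s) • f s := by
  simpa using intervalIntegral.integral_comp_sub_left (a := 0) (b := t)
    (fun s ↦ k (t - s) • f s) t

theorem intervalIntegrable_comp_sub_left_smul {𝕜 : Type*} [NormedField 𝕜] [NormedSpace 𝕜 E]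
    {k : ℝ → 𝕜} (ht : 0 ≤ t)
    (hf : MemLp f ∞ (volume.restrict (Ioo 0 t))) (hk : IntervalIntegrable k volume 0 t) :
    IntervalIntegrable (fun s ↦ k (t - s) • f s) volume 0 t := by
  have hk_sub : IntervalIntegrable (fun s ↦ k (t - s)) volume 0 t := by
    simpa using (hk.comp_sub_left t).symm
  rw [intervalIntegrable_iff_integrableOn_Ioo_of_le ht] at hk_sub ⊢
  exact hk_sub.smul_of_top_left hf

variable [NormedSpace ℂ E] [CompleteSpace E]

theorem rlIntegral_integral_comp_sub_left_smul {k : ℝ → ℂ} {ν : ℝ} (hν : 0 < ν)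
    (ht : 0 ≤ t) (hf : MemLp f ∞ (volume.restrict (Ioo 0 t)))
    (hk : IntervalIntegrable k volume 0 t) :
    rlIntegral ν (fun τ ↦ ∫ s in (0 : ℝ)..τ, k (τ - s) • f s) t =
      ∫ s in (0 : ℝ)..t, rlIntegral ν k (t - s) • f s := by
  let S : E →L[ℝ] ℂ →L[ℝ] E := (ContinuousLinearMap.lsmul ℝ ℂ).flip
  have h_conv : EqOn (fun τ ↦ ∫ s in (0 : ℝ)..τ, k (τ - s) • f s)
      (posConvolution f k S volume) (Ioo 0 t) := fun τ hτ ↦ by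
    simp [S, posConvolution_apply_of_nonneg _ _ _ _ hτ.1.le]
  have h_rl : EqOn (posConvolution k (rlKernel ν) (ContinuousLinearMap.lsmul ℝ ℝ).flip volume)
      (rlIntegral ν k) (Ioo 0 t) := fun τ hτ ↦ (rlIntegral_eq_posConvolution ν k hτ.1.le).symm
  rw [intervalIntegrable_iff_integrableOn_Ioo_of_le ht] at hk
  have h_rlKernel := (intervalIntegrable_iff_integrableOn_Ioo_of_le ht).1
    (intervalIntegrable_rlKernel hν 0 t)
  rw [rlIntegral_congr ν ht h_conv, rlIntegral_eq_posConvolution ν _ ht,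
    posConvolution_assoc S _ S (ContinuousLinearMap.lsmul ℝ ℝ).flip
      (fun x y z ↦ (smul_assoc z y x).symm) hf hk h_rlKernel,
    posConvolution_congr _ _ (eqOn_refl _ _) h_rl le_rfl, posConvolution_apply_of_nonneg _ _ _ _ ht]
  simp [S]

theorem convolution_kernel_volterra_general {α γ : ℝ} (hα : 0 < α) (hγ : 0 < γ)
    (lam : ℂ) {φ w : ℝ → E} (ht : 0 ≤ t) (hφ : MemLp φ ∞ (volume.restrict (Ioo 0 t)))
    (hw : ∀ τ ∈ Icc 0 t, w τ = ∫ ξ in (0 : ℝ)..τ, mlKernel α γ lam ξ • φ (τ - ξ)) :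
    w t = rlIntegral γ φ t - lam • rlIntegral α w t := by
  have hw_conv : EqOn w (fun τ ↦ ∫ s in (0 : ℝ)..τ, mlKernel α γ lam (τ - s) • φ s) (Icc 0 t) :=
    fun τ hτ ↦ (hw τ hτ).trans (intervalIntegral_smul_comp_sub_left _ φ τ)
  have h_ml := intervalIntegrable_mlKernel hα hγ lam 0 t
  have h_resolvent : lam • rlIntegral α w t = rlIntegral γ φ t - w t := calc
    lam • rlIntegral α w t
      = ∫ s in (0 : ℝ)..t, lam • rlIntegral α (mlKernel α γ lam) (t - s) • φ s := by
      rw [rlIntegral_congr α ht (hw_conv.mono Ioo_subset_Icc_self),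
        rlIntegral_integral_comp_sub_left_smul hα ht hφ h_ml, intervalIntegral.integral_smul]
    _ = ∫ s in (0 : ℝ)..t, (rlKernel γ (t - s) • φ s - mlKernel α γ lam (t - s) • φ s) := by
      refine intervalIntegral.integral_congr_Ioo_of_le ht fun s hs ↦ ?_
      simp only [smul_smul, mul_rlIntegral_mlKernel hα hγ lam (sub_pos.2 hs.2), sub_smul,
        Complex.coe_smul]
    _ = rlIntegral γ φ t - w t := by
      rw [intervalIntegral.integral_sub
        (intervalIntegrable_comp_sub_left_smul ht hφ (intervalIntegrable_rlKernel hγ 0 t))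
        (intervalIntegrable_comp_sub_left_smul ht hφ h_ml), hw_conv (right_mem_Icc.2 ht),
        rlIntegral_eq_integral_rlKernel]
  rw [h_resolvent, sub_sub_cancel]

end Volterra

/-- For `β > 0`, `λ ∈ ℂ` and `φ` continuous and bounded on `[0,∞)`, the function
`w(t) = ∫₀^t φ(t-ξ) ξ^{β-1} E_{β,β}(-λ ξ^β) dξ` satisfies
`w(t) = (1/Γ(β)) ∫₀^t (t-τ)^{β-1} φ(τ) dτ - (λ/Γ(β)) ∫₀^t (t-τ)^{β-1} w(τ) dτ`,
i.e. `w = ₀D_t^{-β}(φ - λ w)` with the Riemann–Liouville fractional integral. -/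
theorem convolution_kernel_volterra (β : ℝ) (hβ : 0 < β) (lam : ℂ) (φ : ℝ → ℂ)
    (hφcont : ContinuousOn φ (Set.Ici 0))
    (hφb : ∃ C : ℝ, ∀ t ≥ (0 : ℝ), ‖φ t‖ ≤ C)
    (w : ℝ → ℂ)
    (hw : ∀ t : ℝ, w t =
      ∫ ξ in (0 : ℝ)..t, φ (t - ξ) * ((ξ ^ (β - 1) : ℝ) : ℂ) *
        mittagLeffler β β (-lam * ((ξ ^ β : ℝ) : ℂ))) :
    ∀ t ≥ (0 : ℝ), w t =
      (1 / (Real.Gamma β : ℂ)) *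
          (∫ τ in (0 : ℝ)..t, (((t - τ) ^ (β - 1) : ℝ) : ℂ) * φ τ) -
        lam / (Real.Gamma β : ℂ) *
          ∫ τ in (0 : ℝ)..t, (((t - τ) ^ (β - 1) : ℝ) : ℂ) * w τ := by
  intro t ht
  obtain ⟨C, hC⟩ := hφb
  have h_sub : Ioo 0 t ⊆ Ici 0 := Ioo_subset_Ioi_self.trans Ioi_subset_Ici_self
  have hφ_bdd : MemLp φ ∞ (volume.restrict (Ioo 0 t)) :=
    memLp_top_of_bound ((hφcont.mono h_sub).aestronglyMeasurable measurableSet_Ioo) C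
      (ae_restrict_of_forall_mem measurableSet_Ioo fun s hs ↦ hC s (h_sub hs))
  have h_volterra := convolution_kernel_volterra_general hβ hβ lam ht hφ_bdd (w := w)
    fun τ _ ↦ by simp only [hw τ, mlKernel, smul_eq_mul, mul_comm, mul_left_comm]
  simp only [rlIntegral, Complex.real_smul, smul_eq_mul] at h_volterra
  rw [h_volterra]
  push_cast
  ring
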